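/- arXiv:math/0112301 — 3 statements merged into one kernel-verified Lean document; each statement's English description precedes it below -/
import Mathlib

section
/- Borel's Lemma (Banach-valued version): Let E be a real Banach space and let (a_n)_{n∈ℕ} be an arbitrary sequence of elements of E. Then there exists an infinitely differentiable function f : ℝ → E such that for every n ∈ ℕ the n-th iterated derivative of f at 0 equals a_n. -/
/-!
Cut the monomial `xⁿ / n! • a n` off to a compactly supported function `g` and replace it by
`x ↦ c⁻ⁿ g (c x)`. This keeps the `n`-th derivative at `0` and, as `c → ∞`, makes the support and
all derivatives of order `< n` uniformly small. Choosing `c` separately for each `n`, every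
differentiated series is dominated by a geometric series up to finitely many terms, so it may be
differentiated termwise as long as its sum exists at each point. It does, in `E` itself, because
only finitely many terms are nonzero there: away from `0` because the supports shrink to `0`, and
at `0` because only the `k`-th term has a nonzero `k`-th derivative.
-/

open Filter Function Metric Set Topology
open scoped ContDiff Nat

section Series

theorem tendstoUniformly_tsum_of_summable {ι α F : Type*} [NormedAddCommGroup F]
    {f : ι → α → F} {u : ι → ℝ} (hu : Summable u) (hf : ∀ x, Summable fun i => f i x)
    (hfu : ∀ᶠ i in cofinite, ∀ x, ‖f i x‖ ≤ u i) :
    TendstoUniformly (fun (t : Finset ι) x => ∑ i ∈ t, f i x) (fun x => ∑' i, f i x) atTop := by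
  refine tendstoUniformly_iff.2 fun ε hε => ?_
  have tail_lt : ∀ᶠ t : Finset ι in atTop, ∑' i : {i // i ∉ t}, u i < ε :=
    (tendsto_tsum_compl_atTop_zero u).eventually_lt_const hε
  filter_upwards [tail_lt, eventually_ge_atTop (Set.Finite.toFinset hfu)] with t ht hle x
  have bound (i : {i // i ∉ t}) : ‖f i x‖ ≤ u i := by
    by_contra h
    exact i.2 (hle ((Set.Finite.mem_toFinset hfu).2 fun hi => h (hi x)))
  rw [dist_eq_norm]
  exact (((t.hasSum_iff_compl).1 (hf x).hasSum).norm_le_of_bounded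
    (hu.subtype _).hasSum bound).trans_lt ht

variable {ι 𝕜 F : Type*} [NontriviallyNormedField 𝕜] [IsRCLikeNormedField 𝕜]
  [NormedAddCommGroup F] [NormedSpace 𝕜 F]

theorem hasDerivAt_tsum_of_summable {f f' : ι → 𝕜 → F} {u : ι → ℝ} (hu : Summable u)
    (hderiv : ∀ i x, HasDerivAt (f i) (f' i x) x) (hf : ∀ x, Summable fun i => f i x)
    (hf' : ∀ x, Summable fun i => f' i x) (hfu : ∀ᶠ i in cofinite, ∀ x, ‖f' i x‖ ≤ u i) (x : 𝕜) :
    HasDerivAt (fun x => ∑' i, f i x) (∑' i, f' i x) x :=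
  hasDerivAt_of_tendstoUniformly (tendstoUniformly_tsum_of_summable hu hf' hfu)
    (.of_forall fun _ x => .fun_sum fun i _ => hderiv i x) (fun x => (hf x).hasSum) x

theorem hasDerivAt_tsum_iteratedDeriv {f : ι → 𝕜 → F} {u : ι → ℝ} {k : ℕ}
    (hf : ∀ i, ContDiff 𝕜 (k + 1) (f i)) (hu : Summable u)
    (hsum : ∀ x, Summable fun i => iteratedDeriv k (f i) x)
    (hsum_succ : ∀ x, Summable fun i => iteratedDeriv (k + 1) (f i) x)
    (hfu : ∀ᶠ i in cofinite, ∀ x, ‖iteratedDeriv (k + 1) (f i) x‖ ≤ u i) (x : 𝕜) :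
    HasDerivAt (fun x => ∑' i, iteratedDeriv k (f i) x)
      (∑' i, iteratedDeriv (k + 1) (f i) x) x := by
  refine hasDerivAt_tsum_of_summable hu (fun i x => ?_) hsum hsum_succ hfu x
  rw [iteratedDeriv_succ]
  exact ((hf i).differentiable_iteratedDeriv' k x).hasDerivAt

variable {f : ι → 𝕜 → F} {u : ℕ → ι → ℝ} {N : ℕ∞}

theorem iteratedDeriv_tsum_of_summable (hf : ∀ i, ContDiff 𝕜 N (f i))
    (hu : ∀ k : ℕ, k ≤ N → Summable (u k))
    (hsum : ∀ k : ℕ, k ≤ N → ∀ x, Summable fun i => iteratedDeriv k (f i) x)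
    (hfu : ∀ k : ℕ, k ≤ N → ∀ᶠ i in cofinite, ∀ x, ‖iteratedDeriv k (f i) x‖ ≤ u k i)
    {k : ℕ} (hk : k ≤ N) :
    iteratedDeriv k (fun x => ∑' i, f i x) = fun x => ∑' i, iteratedDeriv k (f i) x := by
  induction k with
  | zero => simp
  | succ k ih =>
    have hkN : (k : ℕ∞) ≤ N := le_trans (mod_cast k.le_succ) hk
    ext x
    rw [iteratedDeriv_succ, ih hkN]
    exact (hasDerivAt_tsum_iteratedDeriv (fun i => (hf i).of_le (mod_cast hk)) (hu _ hk)
      (hsum k hkN) (hsum _ hk) (hfu _ hk) x).deriv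

theorem contDiff_tsum_of_summable (hf : ∀ i, ContDiff 𝕜 N (f i))
    (hu : ∀ k : ℕ, k ≤ N → Summable (u k))
    (hsum : ∀ k : ℕ, k ≤ N → ∀ x, Summable fun i => iteratedDeriv k (f i) x)
    (hfu : ∀ k : ℕ, k ≤ N → ∀ᶠ i in cofinite, ∀ x, ‖iteratedDeriv k (f i) x‖ ≤ u k i) :
    ContDiff 𝕜 N fun x => ∑' i, f i x := by
  refine contDiff_iff_iteratedDeriv.2 ⟨fun k hk => ?_, fun k hk x => ?_⟩
  · rw [iteratedDeriv_tsum_of_summable hf hu hsum hfu hk]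
    refine (tendstoUniformly_tsum_of_summable (hu k hk) (hsum k hk) (hfu k hk)).continuous
      (.of_forall fun t => continuous_finsetSum t fun i _ => ?_)
    exact (hf i).continuous_iteratedDeriv k (mod_cast hk)
  · have hk' : ((k + 1 : ℕ) : ℕ∞) ≤ N := mod_cast Order.add_one_le_of_lt hk
    rw [iteratedDeriv_tsum_of_summable hf hu hsum hfu hk.le]
    exact (hasDerivAt_tsum_iteratedDeriv (fun i => (hf i).of_le (mod_cast hk')) (hu _ hk')
      (hsum k hk.le) (hsum _ hk') (hfu _ hk') x).differentiableAt

end Series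

section Support

variable {𝕜 F : Type*} [NontriviallyNormedField 𝕜] [NormedAddCommGroup F] [NormedSpace 𝕜 F]
  {f : 𝕜 → F}

theorem tsupport_iteratedDeriv_subset (k : ℕ) : tsupport (iteratedDeriv k f) ⊆ tsupport f := by
  rw [iteratedDeriv_eq_equiv_comp]
  exact (tsupport_comp_subset (map_zero _) _).trans (tsupport_iteratedFDeriv_subset k)

theorem exists_forall_norm_iteratedDeriv_le {k : ℕ} (hf : ContDiff 𝕜 k f)
    (hs : HasCompactSupport f) : ∃ C, ∀ x, ‖iteratedDeriv k f x‖ ≤ C :=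
  (hf.continuous_iteratedDeriv' k).bounded_above_of_compact_support
    (hs.of_isClosed_subset isClosed_closure (tsupport_iteratedDeriv_subset k))

theorem summable_iteratedDeriv_of_tsupport_subset_closedBall {f : ℕ → 𝕜 → F} {r : ℕ → ℝ}
    (hr : Tendsto r atTop (𝓝 0)) (hf : ∀ n, tsupport (f n) ⊆ closedBall 0 (r n)) (k : ℕ) {x : 𝕜}
    (hx : x ≠ 0) : Summable fun n => iteratedDeriv k (f n) x := by
  have vanish : ∀ᶠ n in cofinite, iteratedDeriv k (f n) x = 0 := by
    rw [Nat.cofinite_eq_atTop]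
    filter_upwards [hr.eventually_lt_const (norm_pos_iff.2 hx)] with n hn
    refine image_eq_zero_of_notMem_tsupport fun h => hn.not_ge ?_
    simpa using hf n (tsupport_iteratedDeriv_subset k h)
  exact summable_of_hasFiniteSupport vanish

end Support

section Rescale

variable {E : Type*} [NormedAddCommGroup E] [NormedSpace ℝ E] {g : ℝ → E}

/-- The rescaling `x ↦ c⁻ⁿ g (c x)` of `g`, normalized to preserve the `n`-th derivative at `0`. -/
noncomputable def rescale (n : ℕ) (c : ℝ) (g : ℝ → E) (x : ℝ) : E :=
  (c ^ n)⁻¹ • g (c * x)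

theorem contDiff_rescale {N : ℕ∞ω} (hg : ContDiff ℝ N g) (n : ℕ) (c : ℝ) :
    ContDiff ℝ N (rescale n c g) :=
  (hg.comp (contDiff_const.mul contDiff_id)).const_smul _

theorem iteratedDeriv_rescale {k : ℕ} (hg : ContDiff ℝ k g) (n : ℕ) (c x : ℝ) :
    iteratedDeriv k (rescale n c g) x = (c ^ k / c ^ n) • iteratedDeriv k g (c * x) := by
  unfold rescale
  rw [iteratedDeriv_fun_const_smul_field, iteratedDeriv_comp_const_smul hg, smul_smul,
    inv_mul_eq_div]

theorem eventually_norm_iteratedDeriv_rescale_le {k n : ℕ} (hg : ContDiff ℝ k g)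
    (hs : HasCompactSupport g) (hkn : k < n) {ε : ℝ} (hε : 0 < ε) :
    ∀ᶠ c in atTop, ∀ x, ‖iteratedDeriv k (rescale n c g) x‖ ≤ ε := by
  obtain ⟨C, hC⟩ := exists_forall_norm_iteratedDeriv_le hg hs
  have factor_tendsto : Tendsto (fun c : ℝ => c ^ k / c ^ n * C) atTop (𝓝 0) := by
    simpa using (tendsto_pow_div_pow_atTop_zero hkn).mul_const C
  filter_upwards [factor_tendsto.eventually_le_const hε, eventually_ge_atTop 0] with c hcε hc x
  calc ‖iteratedDeriv k (rescale n c g) x‖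
      = c ^ k / c ^ n * ‖iteratedDeriv k g (c * x)‖ := by
        rw [iteratedDeriv_rescale hg, norm_smul, Real.norm_of_nonneg (by positivity)]
    _ ≤ c ^ k / c ^ n * C := by gcongr; exact hC _
    _ ≤ ε := hcε

theorem eventually_tsupport_rescale_subset (hs : HasCompactSupport g) (n : ℕ) {ε : ℝ}
    (hε : 0 < ε) : ∀ᶠ c in atTop, tsupport (rescale n c g) ⊆ closedBall 0 ε := by
  obtain ⟨R, hR⟩ := hs.isCompact.isBounded.subset_closedBall 0
  filter_upwards [eventually_gt_atTop 0, eventually_ge_atTop (R / ε)] with c hc hRc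
  refine closure_minimal (fun x hx => ?_) isClosed_closedBall
  have hcx : c * x ∈ closedBall 0 R := hR (subset_tsupport g (right_ne_zero_of_smul hx))
  rw [mem_closedBall_zero_iff, norm_mul, Real.norm_of_nonneg hc.le] at hcx
  rw [mem_closedBall_zero_iff]
  refine le_of_mul_le_mul_left (hcx.trans ?_) hc
  rwa [← div_le_iff₀ hε]

theorem iteratedDeriv_rescale_zero {k n : ℕ} {a : E} (hg : ContDiff ℝ k g)
    (hga : iteratedDeriv k g 0 = if k = n then a else 0) {c : ℝ} (hc : c ≠ 0) :
    iteratedDeriv k (rescale n c g) 0 = if k = n then a else 0 := by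
  rw [iteratedDeriv_rescale hg, mul_zero, hga]
  split_ifs with hkn
  · rw [hkn, div_self (pow_ne_zero n hc), one_smul]
  · rw [smul_zero]

end Rescale

section Monomial

variable {E : Type*} [NormedAddCommGroup E] [NormedSpace ℝ E]

theorem exists_contDiff_hasCompactSupport_iteratedDeriv_zero_eq (n : ℕ) (a : E) :
    ∃ g : ℝ → E, ContDiff ℝ ∞ g ∧ HasCompactSupport g ∧
      ∀ k, iteratedDeriv k g 0 = if k = n then a else 0 := by
  let χ : ContDiffBump (0 : ℝ) := default
  have hmono : ContDiff ℝ ∞ fun x : ℝ => (n ! : ℝ)⁻¹ * x ^ n :=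
    contDiff_const.mul (contDiff_id.pow n)
  refine ⟨fun x => χ x • ((n ! : ℝ)⁻¹ * x ^ n) • a, χ.contDiff.smul (hmono.smul contDiff_const),
    χ.hasCompactSupport.smul_right, fun k => ?_⟩
  have eq_monomial : (fun x => χ x • ((n ! : ℝ)⁻¹ * x ^ n) • a) =ᶠ[𝓝 0]
      fun x => ((n ! : ℝ)⁻¹ * x ^ n) • a := by
    filter_upwards [χ.eventuallyEq_one] with x hx
    simp [hx]
  rw [eq_monomial.iteratedDeriv_eq,
    iteratedDeriv_smul_const (hmono.contDiffAt.of_le (mod_cast le_top)),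
    iteratedDeriv_const_mul_field, iteratedDeriv_fun_pow_zero]
  split_ifs with hkn
  · rw [inv_mul_cancel₀ (mod_cast n.factorial_ne_zero), one_smul]
  · rw [Nat.cast_zero, mul_zero, zero_smul]

theorem exists_contDiff_small_iteratedDeriv_zero_eq (n : ℕ) (a : E) {ε : ℝ} (hε : 0 < ε) :
    ∃ f : ℝ → E, ContDiff ℝ ∞ f ∧ tsupport f ⊆ closedBall 0 ε ∧
      (∀ k, iteratedDeriv k f 0 = if k = n then a else 0) ∧
      ∀ k < n, ∀ x, ‖iteratedDeriv k f x‖ ≤ ε := by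
  obtain ⟨g, hg, hs, hga⟩ := exists_contDiff_hasCompactSupport_iteratedDeriv_zero_eq n a
  have hgk (k : ℕ) : ContDiff ℝ k g := hg.of_le (mod_cast le_top)
  have small : ∀ᶠ c in atTop, ∀ k < n, ∀ x, ‖iteratedDeriv k (rescale n c g) x‖ ≤ ε :=
    (eventually_all_finite (finite_lt_nat n)).2 fun k hk =>
      eventually_norm_iteratedDeriv_rescale_le (hgk k) hs hk hε
  obtain ⟨c, hsmall, hsupp, hc⟩ :=
    (small.and ((eventually_tsupport_rescale_subset hs n hε).and (eventually_ne_atTop 0))).exists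
  exact ⟨rescale n c g, contDiff_rescale hg n c, hsupp,
    fun k => iteratedDeriv_rescale_zero (hgk k) (hga k) hc, hsmall⟩

end Monomial

theorem borel_lemma_banach_general (E : Type*) [NormedAddCommGroup E] [NormedSpace ℝ E]
    (a : ℕ → E) :
    ∃ f : ℝ → E, ContDiff ℝ (⊤ : ℕ∞) f ∧ ∀ n : ℕ, iteratedDeriv n f 0 = a n := by
  choose f hf hsupp hzero hsmall using fun n =>
    exists_contDiff_small_iteratedDeriv_zero_eq n (a n) (ε := (1 / 2) ^ n) (by positivity)
  have hsum (k : ℕ) (x : ℝ) : Summable fun n => iteratedDeriv k (f n) x := by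
    obtain rfl | hx := eq_or_ne x 0
    · exact (hasSum_single k fun n hn => by rw [hzero, if_neg hn.symm]).summable
    · exact summable_iteratedDeriv_of_tsupport_subset_closedBall
        (tendsto_pow_atTop_nhds_zero_of_lt_one (by norm_num) (by norm_num)) hsupp k hx
  have hbound (k : ℕ) : ∀ᶠ n in cofinite, ∀ x, ‖iteratedDeriv k (f n) x‖ ≤ (1 / 2) ^ n := by
    rw [Nat.cofinite_eq_atTop]
    filter_upwards [eventually_gt_atTop k] with n hn using hsmall n k hn
  have hgeom (k : ℕ) (_ : (k : ℕ∞) ≤ ⊤) : Summable fun n : ℕ => (1 / 2 : ℝ) ^ n :=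
    summable_geometric_two
  refine ⟨fun x => ∑' n, f n x,
    contDiff_tsum_of_summable hf hgeom (fun k _ => hsum k) fun k _ => hbound k, fun n => ?_⟩
  rw [iteratedDeriv_tsum_of_summable hf hgeom (fun k _ => hsum k) (fun k _ => hbound k) le_top]
  simp only [hzero, tsum_ite_eq']

/-- **Borel's Lemma** (Banach-valued version): for any sequence `a : ℕ → E` in a real
Banach space `E`, there is a smooth function `f : ℝ → E` whose `n`-th derivative at `0`
is `a n` for every `n`. -/
theorem borel_lemma_banach
    (E : Type*) [NormedAddCommGroup E] [NormedSpace ℝ E] [CompleteSpace E]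
    (a : ℕ → E) :
    ∃ f : ℝ → E, ContDiff ℝ (⊤ : ℕ∞) f ∧ ∀ n : ℕ, iteratedDeriv n f 0 = a n :=
  borel_lemma_banach_general E a
end

section
/- Cutoff scaling estimate: Let φ : ℝ → ℝ be a smooth function whose support is contained in [−1,1], let E be a real normed vector space, let a ∈ E, and let n ≥ 1. Then for every ε > 0 there exists λ₀ ≥ 1 such that for every λ ≥ λ₀, every integer k with 0 ≤ k ≤ n−1, and every t ∈ ℝ, the k-th iterated derivative at t of the function g_λ : ℝ → E defined by g_λ(t) = (t^n · φ(λ t) / n!) • a satisfies ‖iteratedDeriv k g_λ t‖ ≤ ε. -/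
/-!
The weight `s ^ n` is homogeneous of degree `n`, so the rescaled function `s ↦ s ^ n • ψ (c * s)`
is `c ^ (-n)` times the dilation by `c` of the fixed function `s ↦ s ^ n • ψ s`, whose derivatives
are bounded because `ψ` has compact support. Each differentiation of the dilation costs one factor
`c`, so a derivative of order `k < n` is `O(‖c‖ ^ (k - n))`, and in particular `O(‖c‖⁻¹)`.
-/

section Rescaling

variable {𝕜 F : Type*} [NontriviallyNormedField 𝕜] [NormedAddCommGroup F] [NormedSpace 𝕜 F]

theorem exists_forall_norm_iteratedDeriv_le_of_hasCompactSupport {f : 𝕜 → F} {m : ℕ}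
    (hf : ContDiff 𝕜 m f) (hf_supp : HasCompactSupport f) :
    ∃ C, ∀ k ≤ m, ∀ x, ‖iteratedDeriv k f x‖ ≤ C := by
  have bound_order (k : ℕ) : ∃ C, k ≤ m → ∀ x, ‖iteratedDeriv k f x‖ ≤ C := by
    by_cases hk : k ≤ m
    · obtain ⟨C, hC⟩ := (hf_supp.iteratedFDeriv (𝕜 := 𝕜) k).exists_bound_of_continuous
        (hf.continuous_iteratedFDeriv (mod_cast hk))
      exact ⟨C, fun _ x => norm_iteratedFDeriv_eq_norm_iteratedDeriv.symm.trans_le (hC x)⟩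
    · exact ⟨0, fun h => absurd h hk⟩
  choose C hC using bound_order
  obtain ⟨B, hB⟩ := ((Set.finite_Iic m).image C).bddAbove
  exact ⟨B, fun k hk x => (hC k hk x).trans (hB (Set.mem_image_of_mem C hk))⟩

theorem iteratedDeriv_pow_smul_comp_const_mul {ψ : 𝕜 → F} {k : ℕ} (hψ : ContDiff 𝕜 k ψ) (n : ℕ)
    {c : 𝕜} (hc : c ≠ 0) (t : 𝕜) :
    iteratedDeriv k (fun s => s ^ n • ψ (c * s)) t =
      (c ^ k / c ^ n) • iteratedDeriv k (fun s => s ^ n • ψ s) (c * t) := by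
  have homogeneous : (fun s => s ^ n • ψ (c * s)) =
      fun s => (c ^ n)⁻¹ • ((c * s) ^ n • ψ (c * s)) := by
    funext s
    rw [smul_smul, mul_pow, inv_mul_cancel_left₀ (pow_ne_zero n hc)]
  have hg : ContDiff 𝕜 k fun s => s ^ n • ψ s := (contDiff_id.pow n).smul hψ
  rw [homogeneous, iteratedDeriv_fun_const_smul_field,
    congrFun (iteratedDeriv_comp_const_smul hg c) t, smul_smul, inv_mul_eq_div]

theorem exists_forall_norm_iteratedDeriv_pow_smul_comp_const_mul_le_div {ψ : 𝕜 → F} {m n : ℕ}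
    (hmn : m < n) (hψ : ContDiff 𝕜 m ψ) (hψ_supp : HasCompactSupport ψ) :
    ∃ C, ∀ c : 𝕜, 1 ≤ ‖c‖ → ∀ k ≤ m, ∀ t,
      ‖iteratedDeriv k (fun s => s ^ n • ψ (c * s)) t‖ ≤ C / ‖c‖ := by
  obtain ⟨C, hC⟩ := exists_forall_norm_iteratedDeriv_le_of_hasCompactSupport
    ((contDiff_id.pow n).smul hψ) (hψ_supp.smul_left (f := fun s => s ^ n))
  refine ⟨C, fun c hc k hk t => ?_⟩
  have hc_pos : 0 < ‖c‖ := one_pos.trans_le hc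
  have ratio_le : ‖c‖ ^ k / ‖c‖ ^ n ≤ 1 / ‖c‖ := by
    rw [div_le_div_iff₀ (pow_pos hc_pos n) hc_pos, ← pow_succ, one_mul]
    exact pow_le_pow_right₀ hc (by omega)
  calc ‖iteratedDeriv k (fun s => s ^ n • ψ (c * s)) t‖
      = ‖c‖ ^ k / ‖c‖ ^ n * ‖iteratedDeriv k (fun s => s ^ n • ψ s) (c * t)‖ := by
        rw [iteratedDeriv_pow_smul_comp_const_mul (hψ.of_le (mod_cast hk)) n
          (norm_pos_iff.1 hc_pos), norm_smul, norm_div, norm_pow, norm_pow]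
    _ ≤ 1 / ‖c‖ * C := by gcongr; exact hC k hk (c * t)
    _ = C / ‖c‖ := one_div_mul_eq_div _ _

theorem cutoff_scaling_estimate_general {ψ : 𝕜 → F} {m n : ℕ} (hmn : m < n)
    (hψ : ContDiff 𝕜 m ψ) (hψ_supp : HasCompactSupport ψ) {ε : ℝ} (hε : 0 < ε) :
    ∃ r : ℝ, 1 ≤ r ∧ ∀ c : 𝕜, r ≤ ‖c‖ → ∀ k ≤ m, ∀ t,
      ‖iteratedDeriv k (fun s => s ^ n • ψ (c * s)) t‖ ≤ ε := by
  obtain ⟨C, hC⟩ := exists_forall_norm_iteratedDeriv_pow_smul_comp_const_mul_le_div hmn hψ hψ_supp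
  refine ⟨max 1 (C / ε), le_max_left _ _, fun c hc k hk t => ?_⟩
  obtain ⟨one_le, div_le⟩ := max_le_iff.1 hc
  exact (hC c one_le k hk t).trans ((div_le_comm₀ hε (one_pos.trans_le one_le)).1 div_le)

end Rescaling

/-- **Cutoff scaling estimate**: if `φ` is smooth with support in `[-1,1]` and `n ≥ 1`,
then all derivatives of order `≤ n - 1` of `t ↦ (tⁿ φ(λ t) / n!) • a` are uniformly
small provided the scaling parameter `λ` is large enough. -/
theorem cutoff_scaling_estimate
    (φ : ℝ → ℝ) (hφ : ContDiff ℝ (⊤ : ℕ∞) φ)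
    (hsupp : Function.support φ ⊆ Set.Icc (-1 : ℝ) 1)
    {E : Type*} [NormedAddCommGroup E] [NormedSpace ℝ E]
    (a : E) (n : ℕ) (hn : 1 ≤ n) :
    ∀ ε > (0 : ℝ), ∃ lam₀ : ℝ, 1 ≤ lam₀ ∧
      ∀ lam : ℝ, lam₀ ≤ lam → ∀ k : ℕ, k ≤ n - 1 → ∀ t : ℝ,
        ‖iteratedDeriv k
            (fun s : ℝ => ((s ^ n * φ (lam * s)) / (n.factorial : ℝ)) • a) t‖ ≤ ε := by
  intro ε hε
  have hψ : ContDiff ℝ (n - 1 : ℕ) fun s => (φ s / (n.factorial : ℝ)) • a :=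
    ((contDiff_infty.1 hφ _).div_const _).smul contDiff_const
  have hψ_supp : HasCompactSupport fun s => (φ s / (n.factorial : ℝ)) • a :=
    (HasCompactSupport.of_support_subset_isCompact isCompact_Icc hsupp).comp_left
      (g := fun y : ℝ => (y / (n.factorial : ℝ)) • a) (by rw [zero_div, zero_smul])
  obtain ⟨lam₀, one_le, small⟩ :=
    cutoff_scaling_estimate_general (Nat.sub_one_lt_of_lt hn) hψ hψ_supp hε
  refine ⟨lam₀, one_le, fun lam hlam k hk t => ?_⟩
  simpa only [mul_div_assoc, mul_smul] using small lam (hlam.trans (Real.le_norm_self lam)) k hk t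
end

section
/- Borel's Lemma with simultaneous primitives: Let E and F be real Banach spaces, let D : F → E be a continuous linear map, and let (a_n)_{n∈ℕ} be a sequence in E and (ν_n)_{n∈ℕ} a sequence in F. Set b_n := a_n + D ν_n. Then there exist smooth functions f¹ : ℝ → E, f² : ℝ → E and g : ℝ → F such that for every n ∈ ℕ, iteratedDeriv n f¹ 0 = a_n, iteratedDeriv n f² 0 = b_n and iteratedDeriv n g 0 = ν_n, and moreover f² t − f¹ t = D (g t) for every t ∈ ℝ. -/
/-!
Rescaling a compactly supported `φ` equal to `xⁿ / n!` near `0` to `l⁻ⁿ φ (l x)` keeps its jet at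
`0`, while for large `l` its support and its derivatives of order `< n` become as small as we
like. With such bumps `ψₙ`, the series `∑ ψₙ(t) aₙ` converges with all its derivatives and has
jet `a` at `0`.

The supports shrink to `{0}` and each jet at `0` has a single nonzero entry, so every derivative of
the series is pointwise a *finite* sum and lies in the span of the `aₙ`. The series therefore
stays inside a possibly incomplete normed space, for instance the graph of an arbitrary linear map
`D`: a smooth curve in the graph with jet `(νₙ, D νₙ)` has components `g` and `D ∘ g`.
-/

open Filter Function Metric Set Topology
open scoped ContDiff

section IteratedDeriv

variable {𝕜 E F : Type*} [NontriviallyNormedField 𝕜] [NormedAddCommGroup E] [NormedSpace 𝕜 E]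
  [NormedAddCommGroup F] [NormedSpace 𝕜 F]

theorem iteratedDeriv_continuousLinearMap_comp (L : E →L[𝕜] F) {f : 𝕜 → E} {n : ℕ} {x : 𝕜}
    (hf : ContDiffAt 𝕜 n f x) : iteratedDeriv n (L ∘ f) x = L (iteratedDeriv n f x) := by
  simp only [iteratedDeriv_eq_iteratedFDeriv, L.iteratedFDeriv_comp_left hf le_rfl,
    ContinuousLinearMap.compContinuousMultilinearMap_coe, comp_apply]

theorem exists_norm_iteratedDeriv_le_of_hasCompactSupport {f : 𝕜 → E} {n : ℕ}
    (hf : ContDiff 𝕜 n f) (hfc : HasCompactSupport f) :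
    ∃ M : ℝ, ∀ x, ‖iteratedDeriv n f x‖ ≤ M := by
  simpa only [norm_iteratedFDeriv_eq_norm_iteratedDeriv] using
    (hfc.iteratedFDeriv (𝕜 := 𝕜) n).exists_bound_of_continuous
      (hf.continuous_iteratedFDeriv le_rfl)

theorem support_iteratedDeriv_subset_tsupport (f : 𝕜 → E) (n : ℕ) :
    support (iteratedDeriv n f) ⊆ tsupport f := by
  intro x hx
  apply support_iteratedFDeriv_subset (𝕜 := 𝕜) n
  rwa [mem_support, ← norm_ne_zero_iff, norm_iteratedFDeriv_eq_norm_iteratedDeriv, norm_ne_zero_iff]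

theorem hasDerivAt_of_linearIsometry_comp (ι : E →ₗᵢ[𝕜] F) {f : 𝕜 → E} {f' : E} {x : 𝕜}
    (h : HasDerivAt (ι ∘ f) (ι f') x) : HasDerivAt f f' x := by
  rw [hasDerivAt_iff_tendsto_slope] at h ⊢
  have slope_comp : slope (ι ∘ f) x = ι ∘ slope f x := by
    ext y
    simp only [slope_def_module, comp_apply, map_smul, map_sub]
  rwa [ι.isometry.isEmbedding.tendsto_nhds_iff, ← slope_comp]

theorem contDiff_of_linearIsometry_comp (ι : E →ₗᵢ[𝕜] F) {f : 𝕜 → E} (hf : ContDiff 𝕜 ∞ (ι ∘ f))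
    (hrange : ∀ n x, iteratedDeriv n (ι ∘ f) x ∈ range ι) : ContDiff 𝕜 ∞ f := by
  choose g hg using hrange
  have hasDerivAt_g (n : ℕ) (x : 𝕜) : HasDerivAt (g n) (g (n + 1) x) x := by
    have hιg : ι ∘ g n = iteratedDeriv n (ι ∘ f) := funext (hg n)
    apply hasDerivAt_of_linearIsometry_comp ι
    rw [hιg, hg, iteratedDeriv_succ]
    exact (hf.differentiable_iteratedDeriv n (mod_cast ENat.natCast_lt_top n) x).hasDerivAt
  have iteratedDeriv_f (n : ℕ) : iteratedDeriv n f = g n := by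
    induction n with
    | zero =>
      ext x
      apply ι.injective
      rw [hg, iteratedDeriv_zero, iteratedDeriv_zero, comp_apply]
    | succ n ih =>
      ext x
      rw [iteratedDeriv_succ, ih, (hasDerivAt_g n x).deriv]
  refine contDiff_of_differentiable_iteratedDeriv fun n _ => ?_
  rw [iteratedDeriv_f]
  exact fun x => (hasDerivAt_g n x).differentiableAt

end IteratedDeriv

theorem iteratedDeriv_tsum_apply {ι 𝕜 E : Type*} [RCLike 𝕜] [NormedAddCommGroup E]
    [NormedSpace 𝕜 E] [CompleteSpace E] {f : ι → 𝕜 → E} {v : ℕ → ι → ℝ} {N : ℕ∞}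
    (hf : ∀ i, ContDiff 𝕜 N (f i)) (hv : ∀ k : ℕ, k ≤ N → Summable (v k))
    (hfv : ∀ (k : ℕ) (i : ι) (x : 𝕜), k ≤ N → ‖iteratedFDeriv 𝕜 k (f i) x‖ ≤ v k i) {k : ℕ}
    (hk : k ≤ N) (x : 𝕜) :
    iteratedDeriv k (fun y => ∑' i, f i y) x = ∑' i, iteratedDeriv k (f i) x := by
  have summable_iteratedFDeriv : Summable fun i => iteratedFDeriv 𝕜 k (f i) x :=
    .of_norm_bounded (hv k hk) fun i => hfv k i x hk
  simp only [iteratedDeriv_eq_iteratedFDeriv, iteratedFDeriv_tsum_apply hf hv hfv hk,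
    ContinuousMultilinearMap.tsum_eval summable_iteratedFDeriv]

section JetRescale

variable {E : Type*} [NormedAddCommGroup E] [NormedSpace ℝ E]

/-- The function `x ↦ l⁻ⁿ φ (l x)`, which for `l ≠ 0` has the same `n`-th derivative at `0`
as `φ`. -/
noncomputable def jetRescale (n : ℕ) (l : ℝ) (φ : ℝ → E) (x : ℝ) : E :=
  (l ^ n)⁻¹ • φ (l * x)

theorem contDiff_jetRescale {N : ℕ∞ω} {φ : ℝ → E} (hφ : ContDiff ℝ N φ) (n : ℕ) (l : ℝ) :
    ContDiff ℝ N (jetRescale n l φ) := by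
  unfold jetRescale
  fun_prop

theorem iteratedDeriv_jetRescale {k : ℕ} {φ : ℝ → E} (hφ : ContDiff ℝ k φ) (n : ℕ) (l x : ℝ) :
    iteratedDeriv k (jetRescale n l φ) x = (l ^ n)⁻¹ • l ^ k • iteratedDeriv k φ (l * x) := by
  unfold jetRescale
  rw [iteratedDeriv_fun_const_smul_field, iteratedDeriv_comp_const_smul hφ]

theorem eventually_norm_iteratedDeriv_jetRescale_le {k n : ℕ} {φ : ℝ → E} {M ε : ℝ}
    (hφ : ContDiff ℝ k φ) (hM : ∀ x, ‖iteratedDeriv k φ x‖ ≤ M) (hkn : k < n) (hε : 0 < ε) :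
    ∀ᶠ l in atTop, ∀ x, ‖iteratedDeriv k (jetRescale n l φ) x‖ ≤ ε := by
  filter_upwards [eventually_ge_atTop 1, eventually_ge_atTop (M / ε)] with l hl hMl x
  have hl₀ : 0 < l := one_pos.trans_le hl
  rw [iteratedDeriv_jetRescale hφ, norm_smul, norm_smul, norm_inv, norm_pow, norm_pow,
    Real.norm_of_nonneg hl₀.le, inv_mul_le_iff₀ (by positivity)]
  calc l ^ k * ‖iteratedDeriv k φ (l * x)‖ ≤ l ^ k * (l * ε) := by
        gcongr
        exact (hM _).trans ((div_le_iff₀ hε).1 hMl)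
    _ = l ^ (k + 1) * ε := by ring
    _ ≤ l ^ n * ε := by gcongr; exact Nat.succ_le_of_lt hkn

theorem eventually_support_jetRescale_subset {φ : ℝ → E} {ε : ℝ} (hφ : HasCompactSupport φ)
    (hε : 0 < ε) (n : ℕ) :
    ∀ᶠ l in atTop, support (jetRescale n l φ) ⊆ closedBall 0 ε := by
  obtain ⟨R, hR⟩ := hφ.isCompact.isBounded.subset_closedBall 0
  filter_upwards [eventually_gt_atTop 0, eventually_ge_atTop (R / ε)] with l hl hRl x hx
  have hlx : l * x ∈ closedBall 0 R := hR (subset_tsupport φ (right_ne_zero_of_smul hx))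
  rw [mem_closedBall_zero_iff, norm_mul, Real.norm_of_nonneg hl.le] at hlx
  rw [mem_closedBall_zero_iff]
  exact le_of_mul_le_mul_left (hlx.trans ((div_le_iff₀ hε).1 hRl)) hl

end JetRescale

theorem exists_contDiff_hasCompactSupport_iteratedDeriv_zero_eq_ite (n : ℕ) :
    ∃ φ : ℝ → ℝ, ContDiff ℝ ∞ φ ∧ HasCompactSupport φ ∧
      ∀ k, iteratedDeriv k φ 0 = if k = n then 1 else 0 := by
  obtain ⟨χ⟩ : Nonempty (ContDiffBump (0 : ℝ)) := inferInstance
  refine ⟨fun x => (n.factorial : ℝ)⁻¹ * (χ x * x ^ n),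
    contDiff_const.mul (χ.contDiff.mul (contDiff_id.pow n)),
    χ.hasCompactSupport.mul_right.mul_left, fun k => ?_⟩
  have eventually_eq_pow : (fun x => χ x * x ^ n) =ᶠ[𝓝 0] fun x => x ^ n := by
    filter_upwards [χ.eventuallyEq_one] with x hx
    rw [hx, Pi.one_apply, one_mul]
  rw [iteratedDeriv_const_mul_field, eventually_eq_pow.iteratedDeriv_eq, iteratedDeriv_fun_pow_zero,
    Nat.cast_ite, mul_ite, inv_mul_cancel₀ (mod_cast n.factorial_ne_zero), Nat.cast_zero, mul_zero]

/-- A bump realizing the `n`-th basic jet: a smooth function whose only nonzero derivative at `0`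
is the `n`-th one, equal to `1`, and whose support and derivatives of order `< n` have size at
most `ε`. -/
structure IsJetBump (n : ℕ) (ε : ℝ) (ψ : ℝ → ℝ) : Prop where
  contDiff : ContDiff ℝ ∞ ψ
  support_subset : support ψ ⊆ closedBall 0 ε
  norm_iteratedDeriv_le : ∀ k < n, ∀ x, ‖iteratedDeriv k ψ x‖ ≤ ε
  iteratedDeriv_zero : ∀ k, iteratedDeriv k ψ 0 = if k = n then 1 else 0

theorem exists_isJetBump (n : ℕ) {ε : ℝ} (hε : 0 < ε) : ∃ ψ, IsJetBump n ε ψ := by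
  obtain ⟨φ, hφ, hφc, hφ₀⟩ := exists_contDiff_hasCompactSupport_iteratedDeriv_zero_eq_ite n
  have hφk (k : ℕ) : ContDiff ℝ k φ := hφ.of_le (mod_cast le_top)
  have eventually_small : ∀ᶠ l in atTop, ∀ k < n, ∀ x,
      ‖iteratedDeriv k (jetRescale n l φ) x‖ ≤ ε :=
    (eventually_all_finite (finite_lt_nat n)).2 fun k hk =>
      let ⟨_, hM⟩ := exists_norm_iteratedDeriv_le_of_hasCompactSupport (hφk k) hφc
      eventually_norm_iteratedDeriv_jetRescale_le (hφk k) hM hk hε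
  obtain ⟨l, hsmall, hsupport, hl⟩ := (eventually_small.and
    ((eventually_support_jetRescale_subset hφc hε n).and (eventually_gt_atTop 0))).exists
  refine ⟨jetRescale n l φ, contDiff_jetRescale hφ n l, hsupport, hsmall, fun k => ?_⟩
  rw [iteratedDeriv_jetRescale (hφk k), mul_zero, hφ₀]
  split_ifs with hkn
  · rw [hkn, smul_eq_mul, smul_eq_mul, mul_one, inv_mul_cancel₀ (by positivity)]
  · rw [smul_zero, smul_zero]

namespace IsJetBump

theorem tsupport_subset {n : ℕ} {ε : ℝ} {ψ : ℝ → ℝ} (hψ : IsJetBump n ε ψ) :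
    tsupport ψ ⊆ closedBall 0 ε :=
  closure_minimal hψ.support_subset isClosed_closedBall

theorem hasCompactSupport {n : ℕ} {ε : ℝ} {ψ : ℝ → ℝ} (hψ : IsJetBump n ε ψ) :
    HasCompactSupport ψ :=
  (isCompact_closedBall 0 ε).of_isClosed_subset (isClosed_tsupport ψ) hψ.tsupport_subset

variable {E : Type*} [NormedAddCommGroup E] [NormedSpace ℝ E] {ε : ℕ → ℝ} {ψ : ℕ → ℝ → ℝ}

theorem finite_setOf_iteratedDeriv_ne_zero (hψ : ∀ n, IsJetBump n (ε n) (ψ n))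
    (hε : Tendsto ε atTop (𝓝 0)) (k : ℕ) (t : ℝ) : {n | iteratedDeriv k (ψ n) t ≠ 0}.Finite := by
  rcases eq_or_ne t 0 with rfl | ht
  · refine (finite_singleton k).subset fun n hn => ?_
    by_contra hnk
    exact hn (by rw [(hψ n).iteratedDeriv_zero, if_neg (Ne.symm hnk)])
  · have eventually_lt : ∀ᶠ n in cofinite, ε n < ‖t‖ := by
      rw [Nat.cofinite_eq_atTop]
      exact hε.eventually_lt_const (norm_pos_iff.2 ht)
    refine (eventually_cofinite.1 eventually_lt).subset fun n hn => not_lt.2 ?_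
    exact mem_closedBall_zero_iff.1
      ((hψ n).tsupport_subset (support_iteratedDeriv_subset_tsupport (ψ n) k hn))

theorem iteratedDeriv_smul {n : ℕ} {ε : ℝ} {ψ : ℝ → ℝ} (hψ : IsJetBump n ε ψ) (k : ℕ) (a : E)
    (t : ℝ) : iteratedDeriv k (fun s => ψ s • a) t = iteratedDeriv k ψ t • a :=
  iteratedDeriv_smul_const (hψ.contDiff.of_le (mod_cast le_top)).contDiffAt a

theorem exists_summable_norm_iteratedFDeriv_smul_le (hψ : ∀ n, IsJetBump n (ε n) (ψ n))
    {a : ℕ → E} (hεa : Summable fun n => ε n * ‖a n‖) (k : ℕ) :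
    ∃ v : ℕ → ℝ, Summable v ∧ ∀ n t, ‖iteratedFDeriv ℝ k (fun s => ψ n s • a n) t‖ ≤ v n := by
  choose M hM using fun n => exists_norm_iteratedDeriv_le_of_hasCompactSupport
    ((hψ n).contDiff.of_le (mod_cast le_top) : ContDiff ℝ k (ψ n)) (hψ n).hasCompactSupport
  refine ⟨fun n => (if k < n then ε n else M n) * ‖a n‖, hεa.congr_cofinite ?_, fun n t => ?_⟩
  · rw [Nat.cofinite_eq_atTop]
    filter_upwards [eventually_gt_atTop k] with n hn
    rw [if_pos hn]
  · rw [norm_iteratedFDeriv_eq_norm_iteratedDeriv, (hψ n).iteratedDeriv_smul, norm_smul]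
    refine mul_le_mul_of_nonneg_right ?_ (norm_nonneg _)
    split_ifs with hkn
    · exact (hψ n).norm_iteratedDeriv_le k hkn t
    · exact hM n t

theorem contDiff_smul {n : ℕ} {ε : ℝ} {ψ : ℝ → ℝ} (hψ : IsJetBump n ε ψ) (a : E) :
    ContDiff ℝ ∞ fun t => ψ t • a :=
  hψ.contDiff.smul contDiff_const

variable [CompleteSpace E]

theorem contDiff_tsum_smul (hψ : ∀ n, IsJetBump n (ε n) (ψ n)) {a : ℕ → E}
    (hεa : Summable fun n => ε n * ‖a n‖) : ContDiff ℝ ∞ fun t => ∑' n, ψ n t • a n := by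
  choose v hv hψv using exists_summable_norm_iteratedFDeriv_smul_le hψ hεa
  exact contDiff_tsum (fun n => (hψ n).contDiff_smul (a n)) (fun k _ => hv k)
    fun k n t _ => hψv k n t

theorem iteratedDeriv_tsum_smul (hψ : ∀ n, IsJetBump n (ε n) (ψ n)) {a : ℕ → E}
    (hεa : Summable fun n => ε n * ‖a n‖) (k : ℕ) (t : ℝ) :
    iteratedDeriv k (fun s => ∑' n, ψ n s • a n) t = ∑' n, iteratedDeriv k (ψ n) t • a n := by
  choose v hv hψv using exists_summable_norm_iteratedFDeriv_smul_le hψ hεa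
  rw [iteratedDeriv_tsum_apply (fun n => (hψ n).contDiff_smul (a n)) (fun k _ => hv k)
    (fun k n t _ => hψv k n t) le_top]
  exact tsum_congr fun n => (hψ n).iteratedDeriv_smul k (a n) t

end IsJetBump

section Borel

variable {E : Type*} [NormedAddCommGroup E] [NormedSpace ℝ E]

theorem exists_contDiff_iteratedDeriv_zero_eq_and_mem_span [CompleteSpace E] (a : ℕ → E) :
    ∃ f : ℝ → E, ContDiff ℝ ∞ f ∧ (∀ n, iteratedDeriv n f 0 = a n) ∧
      ∀ n t, iteratedDeriv n f t ∈ Submodule.span ℝ (range a) := by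
  set ε : ℕ → ℝ := fun n => (1 / 2) ^ n / (‖a n‖ + 1) with hε
  choose ψ hψ using fun n => exists_isJetBump n (by positivity : 0 < ε n)
  have hε_tendsto : Tendsto ε atTop (𝓝 0) :=
    squeeze_zero (fun n => by positivity)
      (fun n => div_le_self (by positivity) (le_add_of_nonneg_left (norm_nonneg _)))
      (tendsto_pow_atTop_nhds_zero_of_lt_one one_half_pos.le one_half_lt_one)
  have hεa : Summable fun n => ε n * ‖a n‖ := by
    refine .of_nonneg_of_le (fun n => by positivity) (fun n => ?_) summable_geometric_two
    rw [hε, div_mul_eq_mul_div, div_le_iff₀ (by positivity)]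
    gcongr
    exact le_add_of_nonneg_right zero_le_one
  have iteratedDeriv_f := IsJetBump.iteratedDeriv_tsum_smul hψ hεa
  refine ⟨_, IsJetBump.contDiff_tsum_smul hψ hεa, fun k => ?_, fun k t => ?_⟩
  · simp only [iteratedDeriv_f, (hψ _).iteratedDeriv_zero, ite_smul, one_smul, zero_smul,
      eq_comm (a := k), tsum_ite_eq]
  · have hfinite := IsJetBump.finite_setOf_iteratedDeriv_ne_zero hψ hε_tendsto k t
    rw [iteratedDeriv_f, tsum_eq_sum (s := hfinite.toFinset) fun n hn => ?_]
    · exact Submodule.sum_mem _ fun n _ =>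
        Submodule.smul_mem _ _ (Submodule.subset_span (mem_range_self n))
    · rw [Finite.mem_toFinset, mem_ofPred_eq, not_not] at hn
      rw [hn, zero_smul]

theorem exists_contDiff_iteratedDeriv_zero_eq (a : ℕ → E) :
    ∃ f : ℝ → E, ContDiff ℝ ∞ f ∧ ∀ n, iteratedDeriv n f 0 = a n := by
  let ι : E →ₗᵢ[ℝ] UniformSpace.Completion E := UniformSpace.Completion.toComplₗᵢ
  obtain ⟨f', hf', hf'₀, hspan⟩ := exists_contDiff_iteratedDeriv_zero_eq_and_mem_span (ι ∘ a)
  have hspan_le : Submodule.span ℝ (range (ι ∘ a)) ≤ LinearMap.range ι.toLinearMap :=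
    Submodule.span_le.2 (range_comp_subset_range a ι)
  have hrange (n : ℕ) (t : ℝ) : iteratedDeriv n f' t ∈ range ι := hspan_le (hspan n t)
  obtain ⟨f, rfl⟩ : ∃ f, ι ∘ f = f' := by
    choose f hf using hrange 0
    exact ⟨f, funext fun t => by rw [comp_apply, hf, iteratedDeriv_zero]⟩
  have hf : ContDiff ℝ ∞ f := contDiff_of_linearIsometry_comp ι hf' hrange
  refine ⟨f, hf, fun n => ι.injective ?_⟩
  calc ι (iteratedDeriv n f 0) = iteratedDeriv n (ι ∘ f) 0 :=
        (iteratedDeriv_continuousLinearMap_comp ι.toContinuousLinearMap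
          (hf.of_le (mod_cast le_top)).contDiffAt).symm
    _ = ι (a n) := hf'₀ n

theorem exists_contDiff_comp_linearMap_iteratedDeriv_zero_eq {F : Type*} [NormedAddCommGroup F]
    [NormedSpace ℝ F] (D : F →ₗ[ℝ] E) (ν : ℕ → F) :
    ∃ g : ℝ → F, ContDiff ℝ ∞ g ∧ ContDiff ℝ ∞ (D ∘ g) ∧
      ∀ n, iteratedDeriv n g 0 = ν n ∧ iteratedDeriv n (D ∘ g) 0 = D (ν n) := by
  obtain ⟨h, hh, hh₀⟩ := exists_contDiff_iteratedDeriv_zero_eq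
    fun n => (⟨(ν n, D (ν n)), (D.mem_graph_iff _).2 rfl⟩ : D.graph)
  let π₁ : D.graph →L[ℝ] F := .fst ℝ F E ∘L D.graph.subtypeL
  let π₂ : D.graph →L[ℝ] E := .snd ℝ F E ∘L D.graph.subtypeL
  have D_comp : D ∘ π₁ ∘ h = π₂ ∘ h := funext fun t => ((D.mem_graph_iff _).1 (h t).2).symm
  have hhn (n : ℕ) : ContDiffAt ℝ n h 0 := (hh.of_le (mod_cast le_top)).contDiffAt
  refine ⟨π₁ ∘ h, π₁.contDiff.comp hh, D_comp ▸ π₂.contDiff.comp hh, fun n => ⟨?_, ?_⟩⟩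
  · rw [iteratedDeriv_continuousLinearMap_comp π₁ (hhn n), hh₀]; rfl
  · rw [D_comp, iteratedDeriv_continuousLinearMap_comp π₂ (hhn n), hh₀]; rfl

end Borel

theorem borel_lemma_simultaneous_primitives_general
    {E F : Type*} [NormedAddCommGroup E] [NormedSpace ℝ E]
    [NormedAddCommGroup F] [NormedSpace ℝ F]
    (D : F →ₗ[ℝ] E) (a : ℕ → E) (ν : ℕ → F) :
    ∃ f₁ f₂ : ℝ → E, ∃ g : ℝ → F,
      ContDiff ℝ (⊤ : ℕ∞) f₁ ∧ ContDiff ℝ (⊤ : ℕ∞) f₂ ∧ ContDiff ℝ (⊤ : ℕ∞) g ∧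
      (∀ n : ℕ, iteratedDeriv n f₁ 0 = a n) ∧
      (∀ n : ℕ, iteratedDeriv n f₂ 0 = a n + D (ν n)) ∧
      (∀ n : ℕ, iteratedDeriv n g 0 = ν n) ∧
      ∀ t : ℝ, f₂ t - f₁ t = D (g t) := by
  obtain ⟨f, hf, hf₀⟩ := exists_contDiff_iteratedDeriv_zero_eq a
  obtain ⟨g, hg, hDg, hg₀⟩ := exists_contDiff_comp_linearMap_iteratedDeriv_zero_eq D ν
  refine ⟨f, f + D ∘ g, g, hf, hf.add hDg, hg, hf₀, fun n => ?_, fun n => (hg₀ n).1,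
    fun t => add_sub_cancel_left (f t) (D (g t))⟩
  rw [iteratedDeriv_add (hf.of_le (mod_cast le_top)).contDiffAt
    (hDg.of_le (mod_cast le_top)).contDiffAt, hf₀, (hg₀ n).2]

/-- **Borel's Lemma with simultaneous primitives**: two sequences `a n` and
`b n = a n + D (ν n)` differing by `D` of a sequence `ν` are realized as the jets at `0`
of smooth functions `f¹, f²` whose difference is `D` of a smooth realization `g` of `ν`. -/
theorem borel_lemma_simultaneous_primitives
    {E F : Type*} [NormedAddCommGroup E] [NormedSpace ℝ E] [CompleteSpace E]
    [NormedAddCommGroup F] [NormedSpace ℝ F] [CompleteSpace F]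
    (D : F →L[ℝ] E) (a : ℕ → E) (ν : ℕ → F) :
    ∃ f₁ f₂ : ℝ → E, ∃ g : ℝ → F,
      ContDiff ℝ (⊤ : ℕ∞) f₁ ∧ ContDiff ℝ (⊤ : ℕ∞) f₂ ∧ ContDiff ℝ (⊤ : ℕ∞) g ∧
      (∀ n : ℕ, iteratedDeriv n f₁ 0 = a n) ∧
      (∀ n : ℕ, iteratedDeriv n f₂ 0 = a n + D (ν n)) ∧
      (∀ n : ℕ, iteratedDeriv n g 0 = ν n) ∧
      ∀ t : ℝ, f₂ t - f₁ t = D (g t) :=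
  borel_lemma_simultaneous_primitives_general D.toLinearMap a ν
end
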